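/- arXiv:1110.0870 — 2 statements merged into one kernel-verified Lean document; each statement's English description precedes it below -/
import Mathlib

section
/- For x > 0 and integers n > m ≥ 0 with n - m odd: 0 < -i·Pₙᵐ(ix)/P_{n-1}ᵐ(ix) < (n/(n-m))·(x + sqrt(1 + x² - m²/n²)); and if n - m is even: (1/(n-m))·(n x + (n-1) sqrt(1 + x² - m²/(n-1)²)) < -i·Pₙᵐ(ix)/P_{n-1}ᵐ(ix). -/
open Complex

/-- The Legendre polynomials (as functions on `ℂ`):
`P₀ = 1`, `P₁(z) = z`, `(n+2) P_{n+2}(z) = (2n+3) z P_{n+1}(z) - (n+1) Pₙ(z)`. -/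
noncomputable def legendrePoly : ℕ → ℂ → ℂ
  | 0, _ => 1
  | 1, z => z
  | n + 2, z =>
      ((2 * (n : ℂ) + 3) * z * legendrePoly (n + 1) z -
        ((n : ℂ) + 1) * legendrePoly n z) / ((n : ℂ) + 2)

/-- The associated Legendre function of the first kind of integer degree `n`
and order `m` (cut plane / DLMF convention):
`Pₙᵐ(z) = (z² - 1)^{m/2} dᵐPₙ/dzᵐ(z)`. -/
noncomputable def assocLegendreP (n m : ℕ) (z : ℂ) : ℂ :=
  (z ^ 2 - 1) ^ ((m : ℂ) / 2) * iteratedDeriv m (legendrePoly n) z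

/-!
Up to constant factors `Pₙᵐ(ix)` is `qₙ(x)`, the `m`-th derivative of the real polynomial
`i⁻ⁿ Pₙ(ix)`. For `N = k + 1`, the pair `a = q_N`, `b = q_k` satisfies the linear system
`(1 + x²) a' = (N + m) b + (N - m) x a` and `(1 + x²) b' = (N - m) a - (N + m) x b`. The ratio
`a / b` solves a Riccati equation, and its bounds say that the quadratic form
`D = (N + m) b² + 2 N x a b - (N - m) a²` is positive. This holds because
`((1 + x²)ᵐ D)' = 2 N (1 + x²)ᵐ a b > 0` for `x > 0`, while `D(0) ≥ 0` when `N - m` is odd,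
since then `a(0) = 0`. Completing the square in `D` with respect to `a` bounds `a / b` from
above; completing it with respect to `b` bounds `b / a` from below, and the three-term
recurrence `(N + 1 - m) q_{N+1} / a = (2 N + 1) x + (N + m) b / a` turns this into the lower
bound of the even case.
-/

open Polynomial

/-- The real polynomials `i⁻ⁿ Pₙ(ix)`, defined by the Legendre recurrence with the sign of its last
term reversed. -/
noncomputable def oblateLegendrePoly : ℕ → ℝ[X]
  | 0 => 1
  | 1 => X
  | n + 2 => C ((n : ℝ) + 2)⁻¹ *
      ((2 * (n : ℝ[X]) + 3) * X * oblateLegendrePoly (n + 1) +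
        ((n : ℝ[X]) + 1) * oblateLegendrePoly n)

/-- The `m`-th derivative of `i⁻ⁿ Pₙ(ix)`: the real counterpart of `Pₙᵐ(ix)`, without the power of
`z² - 1`, which cancels in ratios. -/
noncomputable def oblateLegendreDeriv (n m : ℕ) : ℝ[X] :=
  derivative^[m] (oblateLegendrePoly n)

/-- The quadratic form `D = (N + m) b² + 2 N x a b - (N - m) a²` in `a = q_N` and `b = q_k`, where
`N = k + 1` and `qₙ` is `oblateLegendreDeriv n m`. -/
noncomputable def oblateRiccatiForm (k m : ℕ) : ℝ[X] :=
  ((k : ℝ[X]) + 1 + (m : ℝ[X])) * oblateLegendreDeriv k m ^ 2 +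
    2 * ((k : ℝ[X]) + 1) * X * oblateLegendreDeriv (k + 1) m * oblateLegendreDeriv k m -
    ((k : ℝ[X]) + 1 - (m : ℝ[X])) * oblateLegendreDeriv (k + 1) m ^ 2

theorem iteratedDeriv_polynomial_aeval {R 𝕜 : Type*} [CommSemiring R] [NontriviallyNormedField 𝕜]
    [Algebra R 𝕜] (p : R[X]) (m : ℕ) :
    iteratedDeriv m (fun z : 𝕜 => aeval z p) = fun z => aeval z (derivative^[m] p) := by
  induction m with
  | zero => simp
  | succ m ih =>
    funext z
    rw [iteratedDeriv_succ, ih, Polynomial.deriv_aeval, Function.iterate_succ_apply']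

theorem one_add_X_sq_mul_derivative_pow_mul {R : Type*} [CommSemiring R] (m : ℕ) (p : R[X]) :
    (1 + X ^ 2) * derivative ((1 + X ^ 2) ^ m * p) =
      (1 + X ^ 2) ^ m * ((1 + X ^ 2) * derivative p + 2 * (m : R[X]) * X * p) := by
  cases m with
  | zero => simp
  | succ m =>
    simp only [derivative_mul, derivative_pow_succ, derivative_add, derivative_one, derivative_X,
      C_add, C_1, map_natCast]
    push_cast
    ring

/-- The factor `(1 + x²)ᵐ` is an integrating factor. -/
theorem eval_pos_of_one_add_X_sq_mul_derivative_add_pos (m : ℕ) (p : ℝ[X])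
    (hp : ∀ y > 0, 0 < ((1 + X ^ 2) * derivative p + 2 * (m : ℝ[X]) * X * p).eval y)
    (h0 : 0 ≤ p.eval 0) {x : ℝ} (hx : 0 < x) : 0 < p.eval x := by
  have hmono : StrictMonoOn (fun y => ((1 + X ^ 2) ^ m * p).eval y) (Set.Ici 0) := by
    refine strictMonoOn_of_deriv_pos (convex_Ici 0) (Polynomial.continuousOn _) fun y hy => ?_
    rw [interior_Ici, Set.mem_Ioi] at hy
    have hderiv := congrArg (eval y) (one_add_X_sq_mul_derivative_pow_mul m p)
    rw [eval_mul, eval_mul] at hderiv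
    have hweight : 0 < ((1 + X ^ 2) ^ m : ℝ[X]).eval y := by
      simp only [eval_pow, eval_add, eval_one, eval_X]
      positivity
    have hfactor : 0 < (1 + X ^ 2 : ℝ[X]).eval y := by
      simp only [eval_pow, eval_add, eval_one, eval_X]
      positivity
    rw [Polynomial.deriv]
    exact pos_of_mul_pos_right (hderiv ▸ mul_pos hweight (hp y hy)) hfactor.le
  have hlt := hmono Set.self_mem_Ici hx.le hx
  simp only [eval_mul, eval_pow, eval_add, eval_one, eval_X] at hlt
  have hpos : 0 < (1 + x ^ 2) ^ m * p.eval x := lt_of_le_of_lt (by simpa using h0) hlt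
  exact pos_of_mul_pos_right hpos (by positivity)

theorem mul_lt_add_sqrt_mul_of_quadratic_pos {α β γ a b : ℝ} (hβ : 0 < β) (hb : 0 < b)
    (h : 0 < α * b ^ 2 + 2 * γ * a * b - β * a ^ 2) :
    β * a < (γ + √(γ ^ 2 + α * β)) * b := by
  have hsq : (β * a - γ * b) ^ 2 < (γ ^ 2 + α * β) * b ^ 2 := by
    linear_combination β * h
  have hsqrt := Real.lt_sqrt_of_sq_lt hsq
  rw [Real.sqrt_mul' _ (sq_nonneg b), Real.sqrt_sq hb.le] at hsqrt
  linear_combination hsqrt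

theorem sqrt_sub_mul_lt_of_quadratic_pos {α β γ a b : ℝ} (hα : 0 < α) (hγ : 0 ≤ γ) (ha : 0 < a)
    (hb : 0 < b) (h : 0 < α * b ^ 2 + 2 * γ * a * b - β * a ^ 2) :
    (√(γ ^ 2 + α * β) - γ) * a < α * b := by
  have hsq : (γ ^ 2 + α * β) * a ^ 2 < (α * b + γ * a) ^ 2 := by
    linear_combination α * h
  have hsqrt := (Real.sqrt_lt' (by positivity)).2 hsq
  rw [Real.sqrt_mul' _ (sq_nonneg a), Real.sqrt_sq ha.le] at hsqrt
  linear_combination hsqrt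

theorem mul_sqrt_one_add_sq_sub_div_sq {N : ℝ} (hN : 0 < N) (x m : ℝ) :
    N * √(1 + x ^ 2 - m ^ 2 / N ^ 2) = √((N * x) ^ 2 + (N + m) * (N - m)) := by
  rw [← Real.sqrt_sq hN.le, ← Real.sqrt_mul (sq_nonneg N), Real.sqrt_sq hN.le]
  congr 1
  field_simp
  ring

theorem oblateLegendrePoly_add_two (n : ℕ) :
    ((n : ℝ[X]) + 2) * oblateLegendrePoly (n + 2) =
      (2 * (n : ℝ[X]) + 3) * X * oblateLegendrePoly (n + 1) +
        ((n : ℝ[X]) + 1) * oblateLegendrePoly n := by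
  have hC : ((n : ℝ[X]) + 2) * C ((n : ℝ) + 2)⁻¹ = 1 := by
    rw [← C_eq_natCast, ← C_ofNat, ← C_add, ← C_mul, mul_inv_cancel₀ (by positivity), C_1]
  rw [oblateLegendrePoly, ← mul_assoc, hC, one_mul]

theorem derivative_oblateLegendreDeriv (n m : ℕ) :
    derivative (oblateLegendreDeriv n m) = oblateLegendreDeriv n (m + 1) :=
  (Function.iterate_succ_apply' ..).symm

theorem oblateLegendreDeriv_zero_succ (m : ℕ) : oblateLegendreDeriv 0 (m + 1) = 0 := by
  simp [oblateLegendreDeriv, oblateLegendrePoly]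

theorem derivative_oblateLegendrePoly_contiguous (n : ℕ) :
    derivative (oblateLegendrePoly (n + 1)) =
      ((n : ℝ[X]) + 1) * oblateLegendrePoly n + X * derivative (oblateLegendrePoly n) ∧
    X * derivative (oblateLegendrePoly (n + 1)) + derivative (oblateLegendrePoly n) =
      ((n : ℝ[X]) + 1) * oblateLegendrePoly (n + 1) := by
  induction n with
  | zero => simp [oblateLegendrePoly]
  | succ n ih =>
    obtain ⟨hraise, hlower⟩ := ih
    have hrec := oblateLegendrePoly_add_two n
    have hderiv := congrArg derivative hrec
    simp only [derivative_mul, derivative_add, derivative_X, derivative_natCast, derivative_ofNat,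
      derivative_one] at hderiv
    have hne : (n : ℝ[X]) + 2 ≠ 0 := by exact_mod_cast (n + 1).succ_ne_zero
    have hraise' : derivative (oblateLegendrePoly (n + 2)) =
        ((n : ℝ[X]) + 2) * oblateLegendrePoly (n + 1) +
          X * derivative (oblateLegendrePoly (n + 1)) := by
      apply mul_left_cancel₀ hne
      linear_combination hderiv + (n + 1) * hlower
    push_cast
    constructor
    · linear_combination hraise'
    · linear_combination X * hraise' - hrec + X * hlower + hraise

theorem derivative_oblateLegendreDeriv_contiguous (n m : ℕ) :
    derivative (oblateLegendreDeriv (n + 1) m) =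
      ((n : ℝ[X]) + 1 + (m : ℝ[X])) * oblateLegendreDeriv n m +
        X * derivative (oblateLegendreDeriv n m) ∧
    X * derivative (oblateLegendreDeriv (n + 1) m) + derivative (oblateLegendreDeriv n m) =
      ((n : ℝ[X]) + 1 - (m : ℝ[X])) * oblateLegendreDeriv (n + 1) m := by
  induction m with
  | zero => simpa [oblateLegendreDeriv] using derivative_oblateLegendrePoly_contiguous n
  | succ m ih =>
    obtain ⟨hraise, hlower⟩ := ih
    have hraise' := congrArg derivative hraise
    have hlower' := congrArg derivative hlower
    simp only [derivative_mul, derivative_add, derivative_sub, derivative_X, derivative_natCast,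
      derivative_one, derivative_oblateLegendreDeriv] at hraise' hlower' ⊢
    push_cast
    exact ⟨by linear_combination hraise', by linear_combination hlower'⟩

theorem oblateLegendreDeriv_add_two (n m : ℕ) :
    ((n : ℝ[X]) + 2 - (m : ℝ[X])) * oblateLegendreDeriv (n + 2) m =
      (2 * (n : ℝ[X]) + 3) * X * oblateLegendreDeriv (n + 1) m +
        ((n : ℝ[X]) + 1 + (m : ℝ[X])) * oblateLegendreDeriv n m := by
  obtain ⟨hraise, hlower⟩ := derivative_oblateLegendreDeriv_contiguous n m
  obtain ⟨hraise', hlower'⟩ := derivative_oblateLegendreDeriv_contiguous (n + 1) m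
  push_cast at hraise' hlower'
  linear_combination -hlower' + X * hraise' + hraise + X * hlower

theorem one_add_X_sq_mul_derivative_oblateRiccatiForm (k m : ℕ) :
    (1 + X ^ 2) * derivative (oblateRiccatiForm k m) +
        2 * (m : ℝ[X]) * X * oblateRiccatiForm k m =
      2 * ((k : ℝ[X]) + 1) * (1 + X ^ 2) * oblateLegendreDeriv (k + 1) m *
        oblateLegendreDeriv k m := by
  obtain ⟨hraise, hlower⟩ := derivative_oblateLegendreDeriv_contiguous k m
  simp only [oblateRiccatiForm, derivative_mul, derivative_add, derivative_sub, derivative_sq,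
    derivative_X, derivative_natCast, derivative_ofNat, derivative_one]
  set a := oblateLegendreDeriv (k + 1) m
  set b := oblateLegendreDeriv k m
  have ha : (1 + X ^ 2) * derivative a =
      ((k : ℝ[X]) + 1 + (m : ℝ[X])) * b + ((k : ℝ[X]) + 1 - (m : ℝ[X])) * X * a := by
    linear_combination hraise + X * hlower
  have hb : (1 + X ^ 2) * derivative b =
      ((k : ℝ[X]) + 1 - (m : ℝ[X])) * a - ((k : ℝ[X]) + 1 + (m : ℝ[X])) * X * b := by
    linear_combination hlower - X * hraise
  simp only [map_ofNat]
  linear_combination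
    (2 * ((k : ℝ[X]) + 1) * X * b - 2 * ((k : ℝ[X]) + 1 - (m : ℝ[X])) * a) * ha +
    (2 * ((k : ℝ[X]) + 1 + (m : ℝ[X])) * b + 2 * ((k : ℝ[X]) + 1) * X * a) * hb

theorem eval_oblateLegendreDeriv_succ_succ (n m : ℕ) (x : ℝ) :
    (oblateLegendreDeriv (n + 1) (m + 1)).eval x =
      (n + 1 + m) * (oblateLegendreDeriv n m).eval x +
        x * (oblateLegendreDeriv n (m + 1)).eval x := by
  simpa [derivative_oblateLegendreDeriv] using
    congrArg (eval x) (derivative_oblateLegendreDeriv_contiguous n m).1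

theorem eval_oblateLegendrePoly_pos (n : ℕ) {x : ℝ} (hx : 0 < x) :
    0 < (oblateLegendrePoly n).eval x := by
  induction n using Nat.twoStepInduction with
  | zero => simp [oblateLegendrePoly]
  | one => simpa [oblateLegendrePoly]
  | more n ih₀ ih₁ =>
    simp only [oblateLegendrePoly, eval_mul, eval_add, eval_C, eval_X, eval_natCast, eval_ofNat,
      eval_one]
    positivity

theorem eval_oblateLegendreDeriv_nonneg (n m : ℕ) {x : ℝ} (hx : 0 < x) :
    0 ≤ (oblateLegendreDeriv n m).eval x := by
  induction n generalizing m with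
  | zero =>
    cases m with
    | zero => exact (eval_oblateLegendrePoly_pos 0 hx).le
    | succ m => simp [oblateLegendreDeriv_zero_succ]
  | succ n ih =>
    cases m with
    | zero => exact (eval_oblateLegendrePoly_pos (n + 1) hx).le
    | succ m =>
      rw [eval_oblateLegendreDeriv_succ_succ]
      have := ih m
      have := ih (m + 1)
      positivity

theorem eval_oblateLegendreDeriv_pos {n m : ℕ} (hmn : m ≤ n) {x : ℝ} (hx : 0 < x) :
    0 < (oblateLegendreDeriv n m).eval x := by
  induction m generalizing n with
  | zero => exact eval_oblateLegendrePoly_pos n hx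
  | succ m ih =>
    obtain ⟨k, rfl⟩ := Nat.exists_eq_add_of_lt hmn
    rw [eval_oblateLegendreDeriv_succ_succ]
    have hpos := ih (Nat.le_add_right m k)
    have hnonneg := eval_oblateLegendreDeriv_nonneg (m + k) (m + 1) hx
    positivity

theorem eval_zero_oblateLegendrePoly_of_odd {n : ℕ} (hn : Odd n) :
    (oblateLegendrePoly n).eval 0 = 0 := by
  obtain ⟨k, rfl⟩ := hn
  induction k with
  | zero => simp [oblateLegendrePoly]
  | succ k ih => simp [mul_add, oblateLegendrePoly, ih]

theorem eval_zero_oblateLegendreDeriv_of_odd {n m : ℕ} (hnm : Odd (n + m)) :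
    (oblateLegendreDeriv n m).eval 0 = 0 := by
  induction m generalizing n with
  | zero => exact eval_zero_oblateLegendrePoly_of_odd hnm
  | succ m ih =>
    cases n with
    | zero => simp [oblateLegendreDeriv_zero_succ]
    | succ n =>
      have hodd : Odd (n + m) := by grind
      simp [eval_oblateLegendreDeriv_succ_succ, ih hodd]

theorem eval_oblateRiccatiForm (k m : ℕ) (x : ℝ) :
    (oblateRiccatiForm k m).eval x =
      (k + 1 + m) * (oblateLegendreDeriv k m).eval x ^ 2 +
        2 * ((k + 1) * x) * (oblateLegendreDeriv (k + 1) m).eval x *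
          (oblateLegendreDeriv k m).eval x -
        (k + 1 - m) * (oblateLegendreDeriv (k + 1) m).eval x ^ 2 := by
  simp [oblateRiccatiForm, mul_assoc]

theorem eval_oblateRiccatiForm_pos {k m : ℕ} (hmk : m ≤ k) (hodd : Odd (k + 1 + m)) {x : ℝ}
    (hx : 0 < x) : 0 < (oblateRiccatiForm k m).eval x := by
  refine eval_pos_of_one_add_X_sq_mul_derivative_add_pos m _ (fun y hy => ?_) ?_ hx
  · have ha := eval_oblateLegendreDeriv_pos (hmk.trans k.le_succ) hy
    have hb := eval_oblateLegendreDeriv_pos hmk hy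
    rw [one_add_X_sq_mul_derivative_oblateRiccatiForm]
    simp only [eval_mul, eval_add, eval_pow, eval_X, eval_natCast, eval_ofNat, eval_one]
    positivity
  · rw [eval_oblateRiccatiForm, eval_zero_oblateLegendreDeriv_of_odd hodd]
    simp only [mul_zero, zero_mul, add_zero, ne_eq, OfNat.ofNat_ne_zero, not_false_eq_true,
      zero_pow, sub_zero]
    positivity

theorem oblateLegendreDeriv_ratio_lt {k m : ℕ} (hmk : m ≤ k) (hodd : Odd (k + 1 + m)) {x : ℝ}
    (hx : 0 < x) :
    (oblateLegendreDeriv (k + 1) m).eval x / (oblateLegendreDeriv k m).eval x <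
      (k + 1) / (k + 1 - m) * (x + √(1 + x ^ 2 - m ^ 2 / (k + 1) ^ 2)) := by
  have hN : (0 : ℝ) < k + 1 := by positivity
  have hβ : (0 : ℝ) < k + 1 - m := by
    rw [sub_pos]
    exact_mod_cast Nat.lt_succ_of_le hmk
  have hb := eval_oblateLegendreDeriv_pos hmk hx
  have hform := eval_oblateRiccatiForm_pos hmk hodd hx
  rw [eval_oblateRiccatiForm] at hform
  have hlt := mul_lt_add_sqrt_mul_of_quadratic_pos hβ hb hform
  rwa [← mul_sqrt_one_add_sq_sub_div_sq hN, ← mul_add, ← div_lt_iff₀ hb, mul_div_assoc, mul_comm,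
    ← lt_div_iff₀ hβ, mul_div_right_comm] at hlt

theorem lt_oblateLegendreDeriv_ratio {k m : ℕ} (hmk : m ≤ k) (hodd : Odd (k + 1 + m)) {x : ℝ}
    (hx : 0 < x) :
    1 / (k + 2 - m) * ((k + 2) * x + (k + 1) * √(1 + x ^ 2 - m ^ 2 / (k + 1) ^ 2)) <
      (oblateLegendreDeriv (k + 2) m).eval x / (oblateLegendreDeriv (k + 1) m).eval x := by
  have hN : (0 : ℝ) < k + 1 := by positivity
  have hd : (0 : ℝ) < k + 2 - m := by
    rw [sub_pos]
    exact_mod_cast Nat.lt_add_right 1 (Nat.lt_succ_of_le hmk)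
  have ha := eval_oblateLegendreDeriv_pos (hmk.trans k.le_succ) hx
  have hb := eval_oblateLegendreDeriv_pos hmk hx
  have hform := eval_oblateRiccatiForm_pos hmk hodd hx
  rw [eval_oblateRiccatiForm] at hform
  have hlt := sqrt_sub_mul_lt_of_quadratic_pos (by positivity) (by positivity) ha hb hform
  rw [← mul_sqrt_one_add_sq_sub_div_sq hN] at hlt
  have hrec := congrArg (eval x) (oblateLegendreDeriv_add_two k m)
  simp only [eval_mul, eval_add, eval_sub, eval_X, eval_natCast, eval_ofNat, eval_one] at hrec
  rw [one_div_mul_eq_div, div_lt_div_iff₀ hd ha]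
  linear_combination hlt - hrec

theorem legendrePoly_eq_I_pow_mul_aeval (n : ℕ) (z : ℂ) :
    legendrePoly n z = I ^ n * aeval (-I * z) (oblateLegendrePoly n) := by
  induction n using Nat.twoStepInduction with
  | zero => simp [legendrePoly, oblateLegendrePoly]
  | one => simp [legendrePoly, oblateLegendrePoly, ← mul_assoc]
  | more n ih₀ ih₁ =>
    simp only [legendrePoly, oblateLegendrePoly, ih₀, ih₁, map_mul, map_add, map_natCast,
      map_ofNat, map_one, aeval_X, aeval_C]
    rw [pow_add I n 2, I_sq, pow_succ, coe_algebraMap]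
    push_cast
    ring

theorem iteratedDeriv_legendrePoly_I_mul (n m : ℕ) (x : ℝ) :
    iteratedDeriv m (legendrePoly n) (I * x) =
      I ^ n * (-I) ^ m * ((oblateLegendreDeriv n m).eval x : ℝ) := by
  have hrotate : -I * (I * x) = x := by rw [← mul_assoc, neg_mul, I_mul_I, neg_neg, one_mul]
  rw [funext (legendrePoly_eq_I_pow_mul_aeval n), iteratedDeriv_const_mul_field,
    iteratedDeriv_comp_const_mul (f := fun z => aeval z (oblateLegendrePoly n))
      (contDiff_aeval _ _),
    iteratedDeriv_polynomial_aeval]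
  beta_reduce
  rw [hrotate, mul_assoc, ← oblateLegendreDeriv, ← coe_algebraMap,
    aeval_algebraMap_apply_eq_algebraMap_eval]

theorem neg_I_mul_assocLegendreP_div (k m : ℕ) (x : ℝ) :
    -I * assocLegendreP (k + 1) m (I * x) / assocLegendreP k m (I * x) =
      ((oblateLegendreDeriv (k + 1) m).eval x / (oblateLegendreDeriv k m).eval x : ℝ) := by
  have hbase : (I * x) ^ 2 - 1 ≠ 0 := by
    have hreal : (I * x) ^ 2 - 1 = ((-(x ^ 2 + 1) : ℝ) : ℂ) := by
      rw [mul_pow, I_sq]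
      push_cast
      ring
    rw [hreal, ofReal_ne_zero]
    exact neg_ne_zero.2 (by positivity)
  have hfactor : ((I * x) ^ 2 - 1) ^ ((m : ℂ) / 2) * (I ^ k * (-I) ^ m) ≠ 0 := by
    simp [cpow_eq_zero_iff, hbase]
  have hsucc : -I * assocLegendreP (k + 1) m (I * x) =
      ((I * x) ^ 2 - 1) ^ ((m : ℂ) / 2) * (I ^ k * (-I) ^ m) *
        ((oblateLegendreDeriv (k + 1) m).eval x : ℝ) := by
    rw [assocLegendreP, iteratedDeriv_legendrePoly_I_mul, pow_succ I k]
    linear_combination -(((I * x) ^ 2 - 1) ^ ((m : ℂ) / 2) * (I ^ k * (-I) ^ m) *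
        ((oblateLegendreDeriv (k + 1) m).eval x : ℝ)) * I_sq
  rw [hsucc, assocLegendreP, iteratedDeriv_legendrePoly_I_mul, ← mul_assoc _ (I ^ k * _),
    mul_div_mul_left _ _ hfactor, ofReal_div]

/-- For `x > 0` and integers `n > m ≥ 0`: if `n - m` is odd
then `0 < -i Pₙᵐ(ix)/Pₙ₋₁ᵐ(ix) < (n/(n-m)) (x + √(1+x²-m²/n²))`; if `n - m`
is even then `-i Pₙᵐ(ix)/Pₙ₋₁ᵐ(ix) > (1/(n-m))(n x + (n-1)√(1+x²-m²/(n-1)²))`. -/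
theorem oblate_legendre_P_ratio_bounds (n m : ℕ) (hnm : m < n) (x : ℝ)
    (hx : 0 < x) :
    (Odd (n - m) →
      ∃ r : ℝ, -Complex.I * assocLegendreP n m (Complex.I * x) /
          assocLegendreP (n - 1) m (Complex.I * x) = (r : ℂ) ∧ 0 < r ∧
        r < (n : ℝ) / ((n : ℝ) - (m : ℝ)) *
          (x + Real.sqrt (1 + x ^ 2 - (m : ℝ) ^ 2 / (n : ℝ) ^ 2))) ∧
    (Even (n - m) →
      ∃ r : ℝ, -Complex.I * assocLegendreP n m (Complex.I * x) /
          assocLegendreP (n - 1) m (Complex.I * x) = (r : ℂ) ∧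
        1 / ((n : ℝ) - (m : ℝ)) *
          ((n : ℝ) * x + ((n : ℝ) - 1) *
            Real.sqrt (1 + x ^ 2 - (m : ℝ) ^ 2 / ((n : ℝ) - 1) ^ 2)) < r) := by
  obtain ⟨k, rfl⟩ := Nat.exists_eq_add_one.2 (Nat.zero_lt_of_lt hnm)
  have hmk : m ≤ k := Nat.le_of_lt_succ hnm
  rw [Nat.add_sub_cancel, neg_I_mul_assocLegendreP_div]
  refine ⟨fun hodd => ⟨_, rfl, ?_, ?_⟩, fun heven => ⟨_, rfl, ?_⟩⟩
  · exact div_pos (eval_oblateLegendreDeriv_pos hnm.le hx) (eval_oblateLegendreDeriv_pos hmk hx)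
  · have hodd' : Odd (k + 1 + m) := by grind
    exact_mod_cast oblateLegendreDeriv_ratio_lt hmk hodd' hx
  · obtain ⟨j, rfl⟩ : ∃ j, k = j + 1 := ⟨k - 1, by grind⟩
    have hodd' : Odd (j + 1 + m) := by grind
    have hcast : ((j + 1 + 1 : ℕ) : ℝ) = j + 2 := by push_cast; ring
    have hpred : (j : ℝ) + 2 - 1 = j + 1 := by ring
    rw [hcast, hpred]
    exact lt_oblateLegendreDeriv_ratio (by grind) hodd' hx
end

section
/- For any α > -1, ν > 0 and x > 0: L_{ν+1}^{α-1}(-x)/L_ν^{α}(-x) > (α + x - 1 + sqrt((α+x+1)² + 4νx))/(2(ν+1)). -/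
/-- The generalized Laguerre function `L_ν^{(α)}(x)` for real `ν, α`, defined
through the (entire, reciprocal-Gamma regularized) Kummer series
`L_ν^{(α)}(x) = (Γ(ν+α+1)/Γ(ν+1)) Σ_k (-ν)_k x^k / (Γ(α+1+k) k!)`,
which for nonnegative integer `ν` is the Laguerre polynomial `L_n^{(α)}`. -/
noncomputable def lagL (ν α x : ℝ) : ℝ :=
  (Real.Gamma (ν + α + 1) / Real.Gamma (ν + 1)) *
    ∑' k : ℕ, (∏ j ∈ Finset.range k, ((j : ℝ) - ν)) * x ^ k /
      (Real.Gamma (α + 1 + k) * (Nat.factorial k : ℝ))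

/-!
Write `𝐌(c, b, x) = ∑ (c)ₙ xⁿ / (Γ(b + n) n!)` for the regularized Kummer function. Kummer's
transformation turns the alternating series of `L_ν^α(-x)` into the positive series of
`𝐌(ν + α + 1, α + 1, x)`, and `(ν + 1) L_{ν+1}^{α-1}(-x) / L_ν^α(-x) = M₋ / M` for
`M₋, M, M₊ = 𝐌(c, b - 1, x), 𝐌(c, b, x), 𝐌(c, b + 1, x)`, `c = ν + α + 1`, `b = α + 1`.

If `qₙ` are the terms of `M₊`, then `M = ∑ (b + n) qₙ` and `M₋ + M = ∑ (b + n)² qₙ`, so the strict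
Cauchy–Schwarz inequality gives `M² < M₊ (M₋ + M)`. Eliminating `M₊` through the contiguous relation
`M₋ = (b - 1 + x) M + x (c - b) M₊` leaves a quadratic inequality for `M₋ / M`.
-/

open Finset Polynomial

section Preliminaries

theorem ascPochhammer_eval_eq_prod_range {R : Type*} [CommSemiring R] (n : ℕ) (r : R) :
    (ascPochhammer R n).eval r = ∏ j ∈ range n, (r + j) := by
  induction n with
  | zero => simp
  | succ n ih => rw [ascPochhammer_succ_eval, ih, prod_range_succ]

theorem sum_antidiagonal_choose_mul_ascPochhammer {R : Type*} [CommRing R] (n : ℕ) (b d : R) :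
    ∑ p ∈ antidiagonal n, (n.choose p.1 : R) * ((-1) ^ p.1 * (ascPochhammer R p.1).eval d *
      (ascPochhammer R p.2).eval (b + p.1)) = (ascPochhammer R n).eval (b - d) := by
  have hvandermonde := Ring.descPochhammer_smeval_add n (Commute.all (-d) (b + n - 1))
  rw [descPochhammer_smeval_eq_ascPochhammer, ascPochhammer_smeval_eq_eval,
    show -d + (b + n - 1) - n + 1 = b - d by ring] at hvandermonde
  rw [hvandermonde]
  refine sum_congr rfl fun p hp => ?_
  have hn : (n : R) = p.1 + p.2 := by rw [← mem_antidiagonal.mp hp, Nat.cast_add]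
  have hreflect : (ascPochhammer R p.1).eval d =
      (-1) ^ p.1 * (descPochhammer ℤ p.1).smeval (-d) := by
    have h := ascPochhammer_smeval_neg_eq_descPochhammer (-d) p.1
    rw [neg_neg, ascPochhammer_smeval_eq_eval] at h
    simp [h, Units.smul_def]
  have hshift : (descPochhammer ℤ p.2).smeval (b + n - 1) =
      (ascPochhammer R p.2).eval (b + p.1) := by
    rw [descPochhammer_smeval_eq_ascPochhammer, ascPochhammer_smeval_eq_eval, hn]
    congr 1
    ring
  rw [hreflect, hshift, ← mul_assoc ((-1) ^ p.1), ← mul_pow]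
  simp

theorem inv_Gamma_eq_ascPochhammer_mul (s : ℝ) (m : ℕ) :
    (Real.Gamma s)⁻¹ = (ascPochhammer ℝ m).eval s * (Real.Gamma (s + m))⁻¹ := by
  induction m with
  | zero => simp
  | succ m ih =>
    rw [ih, ascPochhammer_succ_eval, mul_assoc, Nat.cast_succ, ← add_assoc]
    obtain h | h := eq_or_ne (s + m) 0
    · simp [h]
    · rw [Real.Gamma_add_one h, mul_inv, mul_inv_cancel_left₀ h]

theorem sq_lt_mul_of_hasSum {ι : Type*} {w f : ι → ℝ} {A B C : ℝ} (hw : ∀ i, 0 ≤ w i)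
    (hA : HasSum w A) (hB : HasSum (fun i => f i * w i) B) (hC : HasSum (fun i => f i ^ 2 * w i) C)
    {i j : ι} (hi : 0 < w i) (hj : 0 < w j) (hij : f i ≠ f j) : B ^ 2 < A * C := by
  have hA_pos : 0 < A := hasSum_lt hw hi hasSum_zero hA
  have hdev_sum : HasSum (fun k => (A * f k - B) ^ 2 * w k) (A * (A * C - B ^ 2)) := by
    convert! ((hC.mul_left (A ^ 2)).sub (hB.mul_left (2 * A * B))).add (hA.mul_left (B ^ 2)) using 1
    · funext k
      ring
    · ring
  have hdev_nonneg : ∀ k, 0 ≤ (A * f k - B) ^ 2 * w k := fun k => mul_nonneg (sq_nonneg _) (hw k)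
  have hdev_pos : 0 < A * (A * C - B ^ 2) := by
    by_cases h : A * f i - B = 0
    · have hj_ne : A * f j - B ≠ 0 := fun h' =>
        hij (mul_left_cancel₀ hA_pos.ne' (by linarith))
      exact hasSum_lt (i := j) hdev_nonneg (by positivity) hasSum_zero hdev_sum
    · exact hasSum_lt (i := i) hdev_nonneg (by positivity) hasSum_zero hdev_sum
  linarith [pos_of_mul_pos_right hdev_pos hA_pos.le]

end Preliminaries

/-- The `n`-th term `(c)ₙ xⁿ / (Γ(b + n) n!)` of the regularized Kummer series. It vanishes when
`b + n` is a pole of `Γ`, since `Real.Gamma` is `0` there. -/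
noncomputable def regKummerTerm (c b x : ℝ) (n : ℕ) : ℝ :=
  (ascPochhammer ℝ n).eval c * x ^ n / (Real.Gamma (b + n) * n.factorial)

/-- The regularized Kummer function `𝐌(c, b, x) = ₁F₁(c; b; x) / Γ(b)`, the real counterpart of
`Complex.regularizedHGFun {c} {b}`. -/
noncomputable def regKummer (c b x : ℝ) : ℝ :=
  ∑' n, regKummerTerm c b x n

section Kummer

variable (c b x : ℝ)

theorem regKummerTerm_eq_mul_add_one (n : ℕ) :
    regKummerTerm c b x n = (b + n) * regKummerTerm c (b + 1) x n := by
  have hGamma := inv_Gamma_eq_ascPochhammer_mul (b + n) 1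
  rw [ascPochhammer_one, eval_X, Nat.cast_one, add_right_comm] at hGamma
  simp only [regKummerTerm, div_eq_mul_inv, mul_inv, hGamma]
  ring

theorem succ_mul_regKummerTerm_succ (n : ℕ) :
    ((n + 1 : ℕ) : ℝ) * regKummerTerm c b x (n + 1) =
      x * ((c + n) * regKummerTerm c (b + 1) x n) := by
  have hb : b + ((n + 1 : ℕ) : ℝ) = b + 1 + n := by push_cast; ring
  rw [regKummerTerm, regKummerTerm, hb, ascPochhammer_succ_eval, Nat.factorial_succ, Nat.cast_mul,
    pow_succ]
  field_simp

theorem ofReal_regKummerTerm (n : ℕ) :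
    (regKummerTerm c b x n : ℂ) =
      Complex.regularizedHGFunSeries {(c : ℂ)} {(b : ℂ)} n fun _ => (x : ℂ) := by
  have hpoch : (((ascPochhammer ℝ n).eval c : ℝ) : ℂ) = (ascPochhammer ℂ n).eval (c : ℂ) := by
    rw [← ascPochhammer_map Complex.ofRealHom, ← Complex.ofRealHom_eq_coe,
      ← Complex.ofRealHom_eq_coe, eval_map_apply]
  have hGamma : (Real.Gamma (b + n) : ℂ) = Complex.Gamma (b + n) := by
    rw [← Complex.Gamma_ofReal]
    push_cast
    rfl
  simp only [regKummerTerm, Complex.regularizedHGFunSeries,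
    FormalMultilinearSeries.ofScalars_apply_eq, Complex.regularizedHGFunCoeff,
    Multiset.map_singleton, Multiset.prod_singleton, smul_eq_mul]
  push_cast
  rw [hpoch, hGamma]
  ring

theorem summable_regKummerTerm : Summable (regKummerTerm c b x) := by
  have hradius := Complex.radius_regularizedHGFunSeries_eq_top
    (a := {(c : ℂ)}) (b := {(b : ℂ)}) (by simp)
  rw [← Complex.summable_ofReal]
  simpa only [ofReal_regKummerTerm] using
    (Complex.regularizedHGFunSeries {(c : ℂ)} {(b : ℂ)}).summable (x := (x : ℂ)) (by simp [hradius])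

theorem hasSum_regKummer : HasSum (regKummerTerm c b x) (regKummer c b x) :=
  (summable_regKummerTerm c b x).hasSum

theorem hasSum_add_mul_regKummerTerm :
    HasSum (fun n : ℕ => (b + n) * regKummerTerm c (b + 1) x n) (regKummer c b x) := by
  simpa only [← regKummerTerm_eq_mul_add_one] using hasSum_regKummer c b x

theorem hasSum_natCast_mul_regKummerTerm :
    HasSum (fun n : ℕ => n * regKummerTerm c b x n)
      (regKummer c (b - 1) x - (b - 1) * regKummer c b x) := by
  have hshift := hasSum_add_mul_regKummerTerm c (b - 1) x
  rw [sub_add_cancel] at hshift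
  refine (hshift.sub ((hasSum_regKummer c b x).mul_left (b - 1))).congr_fun fun n => ?_
  ring

theorem hasSum_add_sq_mul_regKummerTerm :
    HasSum (fun n : ℕ => (b + n) ^ 2 * regKummerTerm c (b + 1) x n)
      (regKummer c (b - 1) x + regKummer c b x) := by
  convert! (hasSum_natCast_mul_regKummerTerm c b x).add
    ((hasSum_regKummer c b x).mul_left b) using 1
  · funext n
    rw [regKummerTerm_eq_mul_add_one c b]
    ring
  · ring

theorem regKummer_sub_one_eq :
    regKummer c (b - 1) x =
      (b - 1 + x) * regKummer c b x + x * (c - b) * regKummer c (b + 1) x := by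
  have hsucc : HasSum (fun n : ℕ => ((n + 1 : ℕ) : ℝ) * regKummerTerm c b x (n + 1))
      (x * ((c - b) * regKummer c (b + 1) x + regKummer c b x)) := by
    refine ((((hasSum_regKummer c (b + 1) x).mul_left (c - b)).add
      (hasSum_add_mul_regKummerTerm c b x)).mul_left x).congr_fun fun n => ?_
    rw [succ_mul_regKummerTerm_succ]
    ring
  have hsum_eq := (hasSum_natCast_mul_regKummerTerm c b x).unique hsucc.zero_add
  simp only [Nat.cast_zero, zero_mul, zero_add] at hsum_eq
  linarith

theorem sum_antidiagonal_regKummerTerm_mul (n : ℕ) :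
    ∑ p ∈ antidiagonal n, regKummerTerm (b - c) b (-x) p.1 * (x ^ p.2 / p.2.factorial) =
      regKummerTerm c b x n := by
  have hpoch := sum_antidiagonal_choose_mul_ascPochhammer n b (b - c)
  rw [sub_sub_cancel] at hpoch
  rw [regKummerTerm, ← hpoch, mul_div_assoc, sum_mul]
  refine sum_congr rfl fun p hp => ?_
  obtain rfl := mem_antidiagonal.mp hp
  have hchoose : (((p.1 + p.2).choose p.1 : ℕ) : ℝ) / (p.1 + p.2).factorial =
      1 / (p.1.factorial * p.2.factorial) := by
    rw [Nat.cast_add_choose]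
    field_simp
  have hGamma := inv_Gamma_eq_ascPochhammer_mul (b + p.1) p.2
  rw [add_assoc, ← Nat.cast_add] at hGamma
  simp only [regKummerTerm, div_eq_mul_inv, mul_inv, hGamma] at hchoose ⊢
  rw [neg_pow, pow_add]
  linear_combination -((-1) ^ p.1 * (ascPochhammer ℝ p.1).eval (b - c) *
    (ascPochhammer ℝ p.2).eval (b + p.1) * (Real.Gamma (b + (p.1 + p.2 : ℕ)))⁻¹ *
    x ^ p.1 * x ^ p.2) * hchoose

theorem regKummer_neg_mul_exp :
    regKummer (b - c) b (-x) * Real.exp x = regKummer c b x := by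
  rw [Real.exp_eq_exp_ℝ, NormedSpace.exp_eq_tsum_div, regKummer, regKummer,
    tsum_mul_tsum_eq_tsum_sum_antidiagonal_of_summable_norm
      (summable_regKummerTerm (b - c) b (-x)).norm (Real.summable_pow_div_factorial x).norm]
  exact tsum_congr (sum_antidiagonal_regKummerTerm_mul c b x)

variable {c b x}

theorem regKummerTerm_nonneg (hc : 0 < c) (hb : 0 ≤ b) (hx : 0 ≤ x) (n : ℕ) :
    0 ≤ regKummerTerm c b x n :=
  div_nonneg (mul_nonneg (ascPochhammer_pos n c hc).le (pow_nonneg hx n))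
    (mul_nonneg (Real.Gamma_nonneg_of_nonneg (by positivity)) n.factorial.cast_nonneg)

theorem regKummerTerm_pos (hc : 0 < c) (hx : 0 < x) {n : ℕ} (hbn : 0 < b + n) :
    0 < regKummerTerm c b x n :=
  div_pos (mul_pos (ascPochhammer_pos n c hc) (pow_pos hx n))
    (mul_pos (Real.Gamma_pos_of_pos hbn) (mod_cast n.factorial_pos))

theorem regKummer_pos (hc : 0 < c) (hb : 0 ≤ b) (hx : 0 < x) : 0 < regKummer c b x :=
  (summable_regKummerTerm c b x).tsum_pos (regKummerTerm_nonneg hc hb hx.le) 1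
    (regKummerTerm_pos hc hx (by push_cast; linarith))

theorem regKummer_sq_lt (hc : 0 < c) (hb : -1 ≤ b) (hx : 0 < x) :
    regKummer c b x ^ 2 <
      regKummer c (b + 1) x * (regKummer c (b - 1) x + regKummer c b x) :=
  -- At `b = -1` the term of index `0` vanishes, so strictness comes from the indices `1` and `2`.
  sq_lt_mul_of_hasSum (regKummerTerm_nonneg hc (by linarith) hx.le) (hasSum_regKummer c (b + 1) x)
    (hasSum_add_mul_regKummerTerm c b x) (hasSum_add_sq_mul_regKummerTerm c b x)
    (regKummerTerm_pos hc hx (n := 1) (by push_cast; linarith))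
    (regKummerTerm_pos hc hx (n := 2) (by push_cast; linarith)) (by norm_num)

theorem regKummer_ratio_lower (hc : 0 < c) (hb : -1 ≤ b) (hbc : b < c) (hx : 0 < x)
    (hM : 0 < regKummer c b x) :
    (b - 2 + x + √((b + x) ^ 2 + 4 * (c - b) * x)) / 2 <
      regKummer c (b - 1) x / regKummer c b x := by
  set r := regKummer c (b - 1) x / regKummer c b x with hr
  set s := regKummer c (b + 1) x / regKummer c b x with hs
  have hs_pos : 0 < s := div_pos (regKummer_pos hc (by linarith) hx) hM
  have hcontiguous : r = b - 1 + x + x * (c - b) * s := by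
    rw [hr, hs, regKummer_sub_one_eq]
    field_simp
  have hturan : 1 < s * (r + 1) := by
    calc 1 < regKummer c (b + 1) x * (regKummer c (b - 1) x + regKummer c b x) /
          regKummer c b x ^ 2 := (one_lt_div (pow_pos hM 2)).2 (regKummer_sq_lt hc hb hx)
      _ = s * (r + 1) := by rw [hr, hs]; field_simp
  have hcoef : 0 < x * (c - b) := mul_pos hx (sub_pos.2 hbc)
  have hquadratic : x * (c - b) < (r - (b - 1 + x)) * (r + 1) := by
    calc x * (c - b) < x * (c - b) * (s * (r + 1)) := lt_mul_of_one_lt_right hcoef hturan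
      _ = (r - (b - 1 + x)) * (r + 1) := by rw [hcontiguous]; ring
  have hr_gt : b - 1 + x < r := by rw [hcontiguous]; linarith [mul_pos hcoef hs_pos]
  have hr_add_one : 0 < r + 1 := pos_of_mul_pos_right (one_pos.trans hturan) hs_pos.le
  have hsqrt : √((b + x) ^ 2 + 4 * (c - b) * x) < 2 * r - (b - 2 + x) := by
    rw [Real.sqrt_lt' (by linarith)]
    linarith
  linarith

end Kummer

section Laguerre

theorem lagL_eq_regKummer (ν α x : ℝ) :
    lagL ν α x =
      Real.Gamma (ν + α + 1) / Real.Gamma (ν + 1) * regKummer (-ν) (α + 1) x := by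
  simp only [lagL, regKummer, regKummerTerm, ascPochhammer_eval_eq_prod_range, neg_add_eq_sub]

theorem lagL_neg_eq_regKummer (ν α x : ℝ) :
    lagL ν α (-x) = Real.Gamma (ν + α + 1) / Real.Gamma (ν + 1) * Real.exp (-x) *
      regKummer (ν + α + 1) (α + 1) x := by
  have hkummer := regKummer_neg_mul_exp (ν + α + 1) (α + 1) x
  rw [show α + 1 - (ν + α + 1) = -ν by ring] at hkummer
  rw [lagL_eq_regKummer, ← hkummer, Real.exp_neg]
  field_simp

theorem lagL_neg_ratio_eq {ν α : ℝ} (hν : -1 < ν) (hc : 0 < ν + α + 1) (x : ℝ) :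
    lagL (ν + 1) (α - 1) (-x) / lagL ν α (-x) =
      regKummer (ν + α + 1) α x / regKummer (ν + α + 1) (α + 1) x / (ν + 1) := by
  have hν' : 0 < ν + 1 := by linarith
  have hGamma := (Real.Gamma_pos_of_pos hν').ne'
  have hGamma_c := (Real.Gamma_pos_of_pos hc).ne'
  rw [lagL_neg_eq_regKummer, lagL_neg_eq_regKummer, sub_add_cancel,
    show ν + 1 + (α - 1) + 1 = ν + α + 1 by ring, Real.Gamma_add_one hν'.ne']
  field_simp [hGamma, hGamma_c]

theorem lagL_neg_pos_iff {ν α : ℝ} (hν : -1 < ν) (hc : 0 < ν + α + 1) (x : ℝ) :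
    0 < lagL ν α (-x) ↔ 0 < regKummer (ν + α + 1) (α + 1) x := by
  have hGamma : 0 < Real.Gamma (ν + 1) := Real.Gamma_pos_of_pos (by linarith)
  rw [lagL_neg_eq_regKummer]
  exact mul_pos_iff_of_pos_left
    (mul_pos (div_pos (Real.Gamma_pos_of_pos hc) hGamma) (Real.exp_pos _))

theorem lagL_neg_pos {ν α x : ℝ} (hν : -1 < ν) (hα : -1 ≤ α) (hc : 0 < ν + α + 1) (hx : 0 < x) :
    0 < lagL ν α (-x) :=
  (lagL_neg_pos_iff hν hc x).2 (regKummer_pos hc (by linarith) hx)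

theorem laguerre_neg_arg_ratio_lower_general {α ν x : ℝ} (hα : -2 ≤ α) (hν : 0 < ν)
    (hc : 0 < ν + α + 1) (hx : 0 < x) (hL : 0 < lagL ν α (-x)) :
    (α + x - 1 + √((α + x + 1) ^ 2 + 4 * ν * x)) / (2 * (ν + 1)) <
      lagL (ν + 1) (α - 1) (-x) / lagL ν α (-x) := by
  have hν' : -1 < ν := by linarith
  have hlower := regKummer_ratio_lower hc (b := α + 1) (by linarith) (by linarith) hx
    ((lagL_neg_pos_iff hν' hc x).1 hL)
  rw [show α + 1 - 2 + x = α + x - 1 by ring, add_right_comm α 1 x,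
    show ν + α + 1 - (α + 1) = ν by ring, add_sub_cancel_right] at hlower
  rw [lagL_neg_ratio_eq hν' hc, ← div_div]
  exact div_lt_div_of_pos_right hlower (by linarith)

end Laguerre

/-- For `α > -1`, `ν > 0` and `x > 0`:
`L_{ν+1}^{α-1}(-x)/L_ν^{α}(-x) > (α + x - 1 + √((α+x+1)² + 4νx))/(2(ν+1))`. -/
theorem laguerre_neg_arg_ratio_lower (α ν x : ℝ) (hα : -1 < α) (hν : 0 < ν)
    (hx : 0 < x) :
    (α + x - 1 + Real.sqrt ((α + x + 1) ^ 2 + 4 * ν * x)) / (2 * (ν + 1)) <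
      lagL (ν + 1) (α - 1) (-x) / lagL ν α (-x) :=
  laguerre_neg_arg_ratio_lower_general (by linarith) hν (by linarith) hx
    (lagL_neg_pos (by linarith) hα.le (by linarith) hx)
end
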